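/- Theorem 1.3, real analytic case (classification of 3-reflective real analytic planar projective billiards). Every 3-reflective triple of real analytic line-framed curves in ℝ² is right-spherical: if (a₁,v₁), (a₂,v₂), (a₃,v₃) is a 3-reflective triple, then there exist linearly independent vectors p, q, r ∈ ℝ³ such that for every s ∈ U₁, (a₁(s),1) ∈ span{p,q} and r ∈ span{(a₁(s),1),(v₁(s),0)}; for every u ∈ U₂, (a₂(u),1) ∈ span{q,r} and p ∈ span{(a₂(u),1),(v₂(u),0)}; and for every t ∈ U₃, (a₃(t),1) ∈ span{r,p} and q ∈ span{(a₃(t),1),(v₃(t),0)} (i.e., in the projective plane the three boundary curves lie on the three sides of the triangle with vertices [p], [q], [r], and each field line passes through the opposite vertex). -/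

import Mathlib

/-- Two nonzero vectors `u`, `w` of the plane are symmetric with respect to the pair
`(v, τ)` (field direction, tangent direction): there are nonzero scalars `p`, `q` with
`p • u + q • w` on the line spanned by `τ` and `p • u - q • w` on the line spanned by `v`. -/
def PlaneSym (𝕜 : Type*) [Field 𝕜] (v τ u w : 𝕜 × 𝕜) : Prop :=
  ∃ p q : 𝕜, p ≠ 0 ∧ q ≠ 0 ∧ p • u + q • w ∈ Submodule.span 𝕜 {τ} ∧
    p • u - q • w ∈ Submodule.span 𝕜 {v}

/-- Lift of a point of the plane to homogeneous coordinates: `x ↦ (x, 1)`. -/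
def liftPt (𝕜 : Type*) [Field 𝕜] (x : 𝕜 × 𝕜) : 𝕜 × 𝕜 × 𝕜 := (x.1, x.2, 1)

/-- Lift of a direction of the plane to homogeneous coordinates: `x ↦ (x, 0)`. -/
def liftDir (𝕜 : Type*) [Field 𝕜] (x : 𝕜 × 𝕜) : 𝕜 × 𝕜 × 𝕜 := (x.1, x.2, 0)

/-- Determinant of three vectors of `ℝ³`. -/
def D3 (X Y Z : ℝ × ℝ × ℝ) : ℝ :=
  X.1 * (Y.2.1 * Z.2.2 - Y.2.2 * Z.2.1) - X.2.1 * (Y.1 * Z.2.2 - Y.2.2 * Z.1)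
    + X.2.2 * (Y.1 * Z.2.1 - Y.2.1 * Z.1)

theorem D3_plucker (A B C X Y : ℝ × ℝ × ℝ) :
    D3 A B C * D3 A X Y = D3 A X B * D3 A Y C - D3 A X C * D3 A Y B := by
  simp only [D3]; ring

theorem D3_cyc (A B C : ℝ × ℝ × ℝ) : D3 B C A = D3 A B C := by
  simp only [D3]; ring

theorem D3_swap (A B C : ℝ × ℝ × ℝ) : D3 A C B = - D3 A B C := by
  simp only [D3]; ring

theorem D3_expand₁ (A B C X B' : ℝ × ℝ × ℝ) :
    D3 A B C * D3 A X B' = D3 A X B * D3 A B' C + D3 A X C * D3 B B' A := by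
  simp only [D3]; ring

theorem D3_expand₂ (A B C X C' : ℝ × ℝ × ℝ) :
    D3 A B C * D3 A X C' = D3 A X C * D3 A B C' - D3 A X B * D3 C C' A := by
  simp only [D3]; ring

theorem D3_self23 (X Y : ℝ × ℝ × ℝ) : D3 X Y Y = 0 := by simp only [D3]; ring
theorem D3_self13 (X Y : ℝ × ℝ × ℝ) : D3 X Y X = 0 := by simp only [D3]; ring
theorem D3_self12 (X Y : ℝ × ℝ × ℝ) : D3 X X Y = 0 := by simp only [D3]; ring

theorem D3_hasDerivAt {X Y Z : ℝ → ℝ × ℝ × ℝ} {X' Y' Z' : ℝ × ℝ × ℝ} {s : ℝ}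
    (hX : HasDerivAt X X' s) (hY : HasDerivAt Y Y' s) (hZ : HasDerivAt Z Z' s) :
    HasDerivAt (fun r => D3 (X r) (Y r) (Z r))
      (D3 X' (Y s) (Z s) + D3 (X s) Y' (Z s) + D3 (X s) (Y s) Z') s := by
  have f1 : ∀ {W : ℝ → ℝ × ℝ × ℝ} {W' : ℝ × ℝ × ℝ}, HasDerivAt W W' s →
      HasDerivAt (fun r => (W r).1) W'.1 s ∧ HasDerivAt (fun r => (W r).2.1) W'.2.1 s ∧
      HasDerivAt (fun r => (W r).2.2) W'.2.2 s := by
    intro W W' h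
    refine ⟨?_, ?_, ?_⟩
    · exact h.fst
    · exact h.snd.fst
    · exact h.snd.snd
  obtain ⟨x1, x2, x3⟩ := f1 hX
  obtain ⟨y1, y2, y3⟩ := f1 hY
  obtain ⟨z1, z2, z3⟩ := f1 hZ
  have := ((x1.mul ((y2.mul z3).sub (y3.mul z2))).sub (x2.mul ((y1.mul z3).sub (y3.mul z1)))).add
    (x3.mul ((y1.mul z2).sub (y2.mul z1)))
  refine (this.congr_deriv ?_).congr_of_eventuallyEq (Filter.Eventually.of_forall fun r => ?_)
  · simp only [D3, Pi.mul_apply, Pi.sub_apply]; ring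
  · simp only [D3, Pi.mul_apply, Pi.sub_apply, Pi.add_apply]

/-- Multiplying factor in the reflection law. -/
theorem refl_factor {A A' V B C : ℝ × ℝ × ℝ} (hD : D3 A B C ≠ 0) (hc : D3 A A' B ≠ 0)
    (hV : D3 A V A' ≠ 0)
    (hF : D3 A A' B * D3 A V C + D3 A A' C * D3 A V B = 0) :
    ∃ m : ℝ, m ≠ 0 ∧ D3 A V C = m * D3 A A' C ∧ D3 A V B = - m * D3 A A' B := by
  refine ⟨- D3 A V B / D3 A A' B, ?_, ?_, ?_⟩
  · intro h0
    have hB : D3 A V B = 0 := by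
      rcases div_eq_zero_iff.mp h0 with h | h
      · linarith
      · exact absurd h hc
    have hC : D3 A V C = 0 := by
      rw [hB] at hF
      have : D3 A A' B * D3 A V C = 0 := by linarith
      exact (mul_eq_zero.mp this).resolve_left hc
    have hA : D3 A B C * D3 A V A' = 0 := by
      rw [D3_plucker, hB, hC]; ring
    exact hV ((mul_eq_zero.mp hA).resolve_left hD)
  · field_simp; linarith
  · field_simp

/-- Differentiated reflection law. -/
theorem refl_deriv {A A' V B C B' C' : ℝ × ℝ × ℝ} {β γ : ℝ}
    (hD : D3 A B C ≠ 0) (hc : D3 A A' B ≠ 0) (hV : D3 A V A' ≠ 0)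
    (hF : D3 A A' B * D3 A V C + D3 A A' C * D3 A V B = 0)
    (hE : β * (D3 A A' B' * D3 A V C + D3 A A' C * D3 A V B')
      + γ * (D3 A A' B * D3 A V C' + D3 A A' C' * D3 A V B) = 0) :
    β * (D3 A A' C ^ 2 * D3 B B' A) + γ * (D3 A A' B ^ 2 * D3 C C' A) = 0 := by
  obtain ⟨m, hm, hmC, hmB⟩ := refl_factor hD hc hV hF
  have e1 := D3_expand₁ A B C A' B'
  have e2 := D3_expand₁ A B C V B'
  have e3 := D3_expand₂ A B C A' C'
  have e4 := D3_expand₂ A B C V C'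
  rw [hmC, hmB] at e2 e4 hE
  have h2 : (2 * m) * (β * (D3 A A' C ^ 2 * D3 B B' A) + γ * (D3 A A' B ^ 2 * D3 C C' A)) = 0 := by
    linear_combination (D3 A B C) * hE - β * m * D3 A A' C * e1 - β * D3 A A' C * e2
      - γ * D3 A A' B * e4 + γ * m * D3 A A' B * e3
  exact (mul_eq_zero.mp h2).resolve_left (by positivity)

/-- The derivative of the reflection law with respect to the third vertex does not vanish. -/
theorem refl_transversal {A A' V B C C' : ℝ × ℝ × ℝ}
    (hD : D3 A B C ≠ 0) (hc : D3 A A' B ≠ 0) (hV : D3 A V A' ≠ 0) (hb : D3 C C' A ≠ 0)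
    (hF : D3 A A' B * D3 A V C + D3 A A' C * D3 A V B = 0) :
    D3 A A' B * D3 A V C' + D3 A A' C' * D3 A V B ≠ 0 := by
  intro h
  have := refl_deriv (B' := 0) (C' := C') (β := 0) (γ := 1) hD hc hV hF (by linarith)
  have h2 : D3 A A' B ^ 2 * D3 C C' A = 0 := by linarith
  simp_all

/-- Concurrency of the field line at `A` with the tangent lines at `B` and `C`. -/
theorem concur {A A' V B B' C C' : ℝ × ℝ × ℝ}
    (hD : D3 A B C ≠ 0) (hc : D3 A A' B ≠ 0) (hV : D3 A V A' ≠ 0)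
    (hF : D3 A A' B * D3 A V C + D3 A A' C * D3 A V B = 0)
    (hK : D3 B B' C * D3 A A' B * D3 C C' A = D3 A A' C * D3 B B' A * D3 C C' B) :
    D3 B B' A * D3 C C' V - D3 B B' V * D3 C C' A = 0 := by
  obtain ⟨m, hm, hmC, hmB⟩ := refl_factor hD hc hV hF
  have e1 : D3 A B C * D3 C C' V = D3 C C' A * D3 V B C - D3 A V C * D3 C C' B * (-1) := by
    simp only [D3]; ring
  have e2 : D3 A B C * D3 B B' V = D3 B B' A * D3 V B C - D3 A V B * D3 B B' C := by
    simp only [D3]; ring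
  rw [hmC] at e1
  rw [hmB] at e2
  have h2 : D3 A B C * (D3 B B' A * D3 C C' V - D3 B B' V * D3 C C' A) = 0 := by
    linear_combination D3 B B' A * e1 - D3 C C' A * e2 - m * hK
  exact (mul_eq_zero.mp h2).resolve_left hD

theorem cube_eq {x y : ℝ} (h : x ^ 3 = y ^ 3) : x = y :=
  (Odd.strictMono_pow (by decide : Odd 3)).injective h

/-- first order scalar identity: the triple product relation. -/
theorem scalar_first {a2 a3 b1 b3 c1 c2 gs gu : ℝ}
    (h1 : b1 ^ 2 * c2 + c1 ^ 2 * b3 * gu = 0)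
    (h2 : a2 ^ 2 * c1 + c2 ^ 2 * a3 * gs = 0)
    (h3 : a3 ^ 2 * b1 * gu - b3 ^ 2 * a2 * gs = 0) :
    a2 * c1 * b3 = b1 * c2 * a3 := by
  apply cube_eq
  linear_combination (c1 ^ 2 * b3 ^ 3 * a2) * h2 - (c2 ^ 2 * a3 ^ 3 * b1) * h1 +
    (c1 ^ 2 * c2 ^ 2 * a3 * b3) * h3

theorem log_K {a b c d e f a' b' c' d' e' f' : ℝ} (ha : a ≠ 0) (hb : b ≠ 0) (hc : c ≠ 0)
    (hd : d ≠ 0) (he : e ≠ 0) (hf : f ≠ 0) (h : a * b * c = d * e * f)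
    (h' : a' * b * c + a * b' * c + a * b * c' = d' * e * f + d * e' * f + d * e * f') :
    a' / a + b' / b + c' / c = d' / d + e' / e + f' / f := by
  have e1 : a' / a + b' / b + c' / c = (a' * b * c + a * b' * c + a * b * c') / (a * b * c) := by
    field_simp
  have e2 : d' / d + e' / e + f' / f = (d' * e * f + d * e' * f + d * e * f') / (d * e * f) := by
    field_simp
  rw [e1, e2, h', h]

theorem log_I {a b c d g a' b' c' d' g' : ℝ} (ha : a ≠ 0) (hb : b ≠ 0) (hc : c ≠ 0)
    (hd : d ≠ 0) (hg : g ≠ 0) (h : a ^ 2 * b + c ^ 2 * d * g = 0)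
    (h' : 2 * a * a' * b + a ^ 2 * b' + (2 * c * c' * d * g + c ^ 2 * d' * g + c ^ 2 * d * g') = 0) :
    g' / g = 2 * (a' / a) + b' / b - 2 * (c' / c) - d' / d := by
  have e1 : 2 * (a' / a) + b' / b = (2 * a * a' * b + a ^ 2 * b') / (a ^ 2 * b) := by
    field_simp
  have e2 : g' / g + 2 * (c' / c) + d' / d =
      (2 * c * c' * d * g + c ^ 2 * d' * g + c ^ 2 * d * g') / (c ^ 2 * d * g) := by
    field_simp; ring
  have e3 : a ^ 2 * b = - (c ^ 2 * d * g) := by linarith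
  have e4 : 2 * a * a' * b + a ^ 2 * b' = 
    - (2 * c * c' * d * g + c ^ 2 * d' * g + c ^ 2 * d * g') := by linarith
  rw [e3, e4, neg_div_neg_eq, ← e2] at e1
  linarith

/-- second order scalar identity -/
theorem scalar_second {a2 a3 b1 b3 c1 c2 gs gu G x1 x2 x3 E p1 q1 p2 q2 p3 q3 : ℝ}
    (ha2 : a2 ≠ 0) (ha3 : a3 ≠ 0) (hb1 : b1 ≠ 0)
    (hb3 : b3 ≠ 0) (hc1 : c1 ≠ 0) (hc2 : c2 ≠ 0)
    {c1u c1s b1u b1s c2s c2u a2s a2u a3s a3u b3s b3u : ℝ}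
    (hc1u : c1u = (x2 * c1 + c2 * b1) * E) (hc1s : c1s = p1)
    (hb1u : b1u = gu * ((x3 * b1 - b3 * c1) * E))
    (hb1s : b1s = q1 + gs * ((x3 * b1 - b3 * c1) * E))
    (hc2s : c2s = (x1 * c2 - c1 * a2) * E) (hc2u : c2u = q2)
    (ha2s : a2s = gs * ((x3 * a2 + a3 * c2) * E))
    (ha2u : a2u = p2 + gu * ((x3 * a2 + a3 * c2) * E))
    (ha3s : a3s = gs * q3) (ha3u : a3u = gu * q3 + (x2 * a3 - a2 * b3) * E)
    (hb3s : b3s = gs * p3 + (x1 * b3 + b1 * a3) * E) (hb3u : b3u = gu * p3)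
    (h1 : b1 ^ 2 * c2 + c1 ^ 2 * b3 * gu = 0)
    (h2 : a2 ^ 2 * c1 + c2 ^ 2 * a3 * gs = 0)
    (hK : a2 * c1 * b3 = b1 * c2 * a3)
    (hKs : a2s * c1 * b3 + a2 * c1s * b3 + a2 * c1 * b3s
      = b1s * c2 * a3 + b1 * c2s * a3 + b1 * c2 * a3s)
    (hKu : a2u * c1 * b3 + a2 * c1u * b3 + a2 * c1 * b3u
      = b1u * c2 * a3 + b1 * c2u * a3 + b1 * c2 * a3u)
    (h1s : 2 * b1 * b1s * c2 + b1 ^ 2 * c2s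
      + (2 * c1 * c1s * b3 * gu + c1 ^ 2 * b3s * gu + c1 ^ 2 * b3 * G) = 0)
    (h2u : 2 * a2 * a2u * c1 + a2 ^ 2 * c1u
      + (2 * c2 * c2u * a3 * gs + c2 ^ 2 * a3u * gs + c2 ^ 2 * a3 * G) = 0) :
    c1 * q1 - b1 * p1 = 0 ∧ a2 * q2 - c2 * p2 = 0 ∧ b3 * q3 - a3 * p3 = 0 := by
  have hgu : gu = - (b1 ^ 2 * c2) / (c1 ^ 2 * b3) := by field_simp; linarith
  have hgs : gs = - (a2 ^ 2 * c1) / (c2 ^ 2 * a3) := by field_simp; linarith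
  have hgu0 : gu ≠ 0 := by rw [hgu]; simp [*]
  have hgs0 : gs ≠ 0 := by rw [hgs]; simp [*]
  have lKs := log_K ha2 hc1 hb3 hb1 hc2 ha3 hK hKs
  have lKu := log_K ha2 hc1 hb3 hb1 hc2 ha3 hK hKu
  have l1 := log_I hb1 hc2 hc1 hb3 hgu0 h1 h1s
  have l2 := log_I ha2 hc1 hc2 ha3 hgs0 h2 h2u
  -- logarithmic derivatives
  have m1 : c1u / c1 = (x2 + c2 * b1 / c1) * E := by rw [hc1u]; field_simp
  have m2 : b1u / b1 = gu * ((x3 - b3 * c1 / b1) * E) := by rw [hb1u]; field_simp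
  have m3 : b1s / b1 = q1 / b1 + gs * ((x3 - b3 * c1 / b1) * E) := by rw [hb1s]; field_simp
  have m4 : c2s / c2 = (x1 - c1 * a2 / c2) * E := by rw [hc2s]; field_simp
  have m5 : a2s / a2 = gs * ((x3 + a3 * c2 / a2) * E) := by rw [ha2s]; field_simp
  have m6 : a2u / a2 = p2 / a2 + gu * ((x3 + a3 * c2 / a2) * E) := by rw [ha2u]; field_simp
  have m7 : a3s / a3 = gs * (q3 / a3) := by rw [ha3s]; field_simp
  have m8 : a3u / a3 = gu * (q3 / a3) + (x2 - a2 * b3 / a3) * E := by rw [ha3u]; field_simp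
  have m9 : b3s / b3 = gs * (p3 / b3) + (x1 + b1 * a3 / b3) * E := by rw [hb3s]; field_simp
  have m10 : b3u / b3 = gu * (p3 / b3) := by rw [hb3u]; field_simp
  -- auxiliary simplifications
  have n1 : b1 * a3 / b3 = c1 * a2 / c2 := by field_simp; linarith
  have n2 : a2 * b3 / a3 = c2 * b1 / c1 := by field_simp; linarith
  have n3 : gs * (a3 * c2 / a2) = - (c1 * a2 / c2) := by rw [hgs]; field_simp
  have n4 : gs * (b3 * c1 / b1) = - (c1 * a2 / c2) := by
    rw [hgs]; field_simp; linear_combination (-1 : ℝ) * hK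
  have n5 : gu * (a3 * c2 / a2) = - (c2 * b1 / c1) := by
    rw [hgu]; field_simp; linear_combination hK
  have n6 : gu * (b3 * c1 / b1) = - (c2 * b1 / c1) := by rw [hgu]; field_simp
  rw [m5, m9, m3, m4, m7, hc1s] at lKs
  rw [m6, m1, m10, m2, m8, hc2u] at lKu
  rw [m3, m4, m9, hc1s] at l1
  rw [m6, m1, m8, hc2u] at l2
  set K1 := q1 / b1 - p1 / c1 with hK1
  set K2 := q2 / c2 - p2 / a2 with hK2
  set K3 := q3 / a3 - p3 / b3 with hK3
  have r1 : K1 + gs * K3 = 0 := by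
    linear_combination (-1 : ℝ) * lKs + E * n1 + E * n3 + E * n4
  have r2 : K2 + gu * K3 = 0 := by
    linear_combination (-1 : ℝ) * lKu + E * n2 + E * n5 + E * n6
  have r3 : G / gu = 2 * K1 + gs * (2 * x3 * E - p3 / b3) := by
    linear_combination l1 - E * n1 - 2 * E * n4
  have r4 : G / gs = - 2 * K2 + gu * (2 * x3 * E - q3 / a3) := by
    linear_combination l2 + E * n2 + 2 * E * n5
  have r3' : G = gu * (2 * K1 + gs * (2 * x3 * E - p3 / b3)) := by
    rw [← r3]; field_simp
  have r4' : G = gs * (- 2 * K2 + gu * (2 * x3 * E - q3 / a3)) := by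
    rw [← r4]; field_simp
  have r5 : 3 * gs * gu * K3 = 0 := by
    linear_combination r3' - r4' + 2 * gu * r1 + 2 * gs * r2
  have k3 : K3 = 0 := by
    have : 3 * gs * gu ≠ 0 := by simp [*]
    exact (mul_eq_zero.mp r5).resolve_left this
  have k1 : K1 = 0 := by rw [k3] at r1; linarith
  have k2 : K2 = 0 := by rw [k3] at r2; linarith
  refine ⟨?_, ?_, ?_⟩
  · have : c1 * q1 - b1 * p1 = b1 * c1 * K1 := by rw [hK1]; field_simp
    rw [this, k1, mul_zero]
  · have : a2 * q2 - c2 * p2 = a2 * c2 * K2 := by rw [hK2]; field_simp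
    rw [this, k2, mul_zero]
  · have : b3 * q3 - a3 * p3 = a3 * b3 * K3 := by rw [hK3]; field_simp
    rw [this, k3, mul_zero]

theorem D3_smul_1 (c : ℝ) (X Y Z : ℝ × ℝ × ℝ) : D3 (c • X) Y Z = c * D3 X Y Z := by
  simp only [D3, Prod.smul_fst, Prod.smul_snd, smul_eq_mul]; ring
theorem D3_smul_2 (c : ℝ) (X Y Z : ℝ × ℝ × ℝ) : D3 X (c • Y) Z = c * D3 X Y Z := by
  simp only [D3, Prod.smul_fst, Prod.smul_snd, smul_eq_mul]; ring
theorem D3_smul_3 (c : ℝ) (X Y Z : ℝ × ℝ × ℝ) : D3 X Y (c • Z) = c * D3 X Y Z := by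
  simp only [D3, Prod.smul_fst, Prod.smul_snd, smul_eq_mul]; ring
theorem D3_zero_1 (Y Z : ℝ × ℝ × ℝ) : D3 0 Y Z = 0 := by simp [D3]
theorem D3_zero_2 (Y Z : ℝ × ℝ × ℝ) : D3 Y 0 Z = 0 := by simp [D3]
theorem D3_zero_3 (Y Z : ℝ × ℝ × ℝ) : D3 Y Z 0 = 0 := by simp [D3]

open Filter Topology in
theorem deriv_zero_of_ev {f : ℝ → ℝ} {f' x : ℝ} (h : HasDerivAt f f' x)
    (h0 : ∀ᶠ r in 𝓝 x, f r = 0) : f' = 0 := by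
  have h1 : HasDerivAt f 0 x :=
    (hasDerivAt_const x (0 : ℝ)).congr_of_eventuallyEq h0
  exact h.unique h1

open Filter Topology in
theorem slice_fst {Ω : Set (ℝ × ℝ)} (hΩ : IsOpen Ω) {z : ℝ × ℝ} (hz : z ∈ Ω) :
    ∀ᶠ r in 𝓝 z.1, (r, z.2) ∈ Ω := by
  have hc : Continuous (fun r : ℝ => (r, z.2)) := by fun_prop
  exact hc.continuousAt.preimage_mem_nhds (hΩ.mem_nhds hz)

open Filter Topology in
theorem slice_snd {Ω : Set (ℝ × ℝ)} (hΩ : IsOpen Ω) {z : ℝ × ℝ} (hz : z ∈ Ω) :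
    ∀ᶠ r in 𝓝 z.2, (z.1, r) ∈ Ω := by
  have hc : Continuous (fun r : ℝ => (z.1, r)) := by fun_prop
  exact hc.continuousAt.preimage_mem_nhds (hΩ.mem_nhds hz)

theorem hasDerivAt_mk_fst (s u : ℝ) : HasDerivAt (fun r : ℝ => (r, u)) ((1 : ℝ), (0 : ℝ)) s :=
  (hasDerivAt_id s).prodMk (hasDerivAt_const s u)

theorem hasDerivAt_mk_snd (s u : ℝ) : HasDerivAt (fun r : ℝ => (s, r)) ((0 : ℝ), (1 : ℝ)) u :=
  (hasDerivAt_const u s).prodMk (hasDerivAt_id u)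

/-- Partial derivatives. -/
noncomputable def pS (g : ℝ × ℝ → ℝ) (z : ℝ × ℝ) : ℝ := fderiv ℝ g z (1, 0)
/-- Partial derivatives. -/
noncomputable def pU (g : ℝ × ℝ → ℝ) (z : ℝ × ℝ) : ℝ := fderiv ℝ g z (0, 1)

theorem pS_hasDerivAt {g : ℝ × ℝ → ℝ} {z : ℝ × ℝ} (hg : ContDiffAt ℝ 2 g z) :
    HasDerivAt (fun r => g (r, z.2)) (pS g z) z.1 :=
  (hg.differentiableAt (by norm_num)).hasFDerivAt.comp_hasDerivAt z.1 (hasDerivAt_mk_fst z.1 z.2)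

theorem pU_hasDerivAt {g : ℝ × ℝ → ℝ} {z : ℝ × ℝ} (hg : ContDiffAt ℝ 2 g z) :
    HasDerivAt (fun r => g (z.1, r)) (pU g z) z.2 :=
  (hg.differentiableAt (by norm_num)).hasFDerivAt.comp_hasDerivAt z.2 (hasDerivAt_mk_snd z.1 z.2)

theorem mixed {g : ℝ × ℝ → ℝ} {z : ℝ × ℝ} (hg : ContDiffAt ℝ 2 g z) :
    ∃ G : ℝ, HasDerivAt (fun r => pS g (z.1, r)) G z.2 ∧
      HasDerivAt (fun r => pU g (r, z.2)) G z.1 := by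
  have h1 : ContDiffAt ℝ 1 (fderiv ℝ g) z := hg.fderiv_right (by norm_num)
  have h2 : HasFDerivAt (fderiv ℝ g) (fderiv ℝ (fderiv ℝ g) z) z :=
    (h1.differentiableAt (by norm_num)).hasFDerivAt
  have hs : IsSymmSndFDerivAt ℝ g z := hg.isSymmSndFDerivAt (by simp)
  have hap : ∀ v : ℝ × ℝ, HasFDerivAt (fun w => fderiv ℝ g w v)
      ((ContinuousLinearMap.apply ℝ ℝ v).comp (fderiv ℝ (fderiv ℝ g) z)) z := fun v =>
    (ContinuousLinearMap.apply ℝ ℝ v).hasFDerivAt.comp z h2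
  refine ⟨fderiv ℝ (fderiv ℝ g) z (0, 1) (1, 0), ?_, ?_⟩
  · exact (hap (1, 0)).comp_hasDerivAt z.2 (hasDerivAt_mk_snd z.1 z.2)
  · have h3 := (hap (0, 1)).comp_hasDerivAt z.1 (hasDerivAt_mk_fst z.1 z.2)
    have h4 : ((ContinuousLinearMap.apply ℝ ℝ ((0 : ℝ), (1 : ℝ))).comp (fderiv ℝ (fderiv ℝ g) z))
        (1, 0) = fderiv ℝ (fderiv ℝ g) z (0, 1) (1, 0) := (hs (0, 1) (1, 0)).symm
    rw [h4] at h3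
    exact h3

/-- Data of the local problem, in homogeneous coordinates. -/
structure LocalData (A A1 A2 B B1 B2 C C1 C2 V1 V2 V3 W3 : ℝ → ℝ × ℝ × ℝ)
    (Ω : Set (ℝ × ℝ)) (g : ℝ × ℝ → ℝ) : Prop where
  op : IsOpen Ω
  g2 : ∀ z ∈ Ω, ContDiffAt ℝ 2 g z
  hA : ∀ z ∈ Ω, HasDerivAt A (A1 z.1) z.1
  hA1 : ∀ z ∈ Ω, HasDerivAt A1 (A2 z.1) z.1
  hB : ∀ z ∈ Ω, HasDerivAt B (B1 z.2) z.2
  hB1 : ∀ z ∈ Ω, HasDerivAt B1 (B2 z.2) z.2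
  hC : ∀ z ∈ Ω, HasDerivAt C (C1 (g z)) (g z)
  hC1 : ∀ z ∈ Ω, HasDerivAt C1 (C2 (g z)) (g z)
  hV3 : ∀ z ∈ Ω, HasDerivAt V3 (W3 (g z)) (g z)
  hD : ∀ z ∈ Ω, D3 (A z.1) (B z.2) (C (g z)) ≠ 0
  nc1 : ∀ z ∈ Ω, D3 (A z.1) (A1 z.1) (B z.2) ≠ 0
  nb1 : ∀ z ∈ Ω, D3 (A z.1) (A1 z.1) (C (g z)) ≠ 0
  nc2 : ∀ z ∈ Ω, D3 (B z.2) (B1 z.2) (A z.1) ≠ 0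
  na2 : ∀ z ∈ Ω, D3 (B z.2) (B1 z.2) (C (g z)) ≠ 0
  na3 : ∀ z ∈ Ω, D3 (C (g z)) (C1 (g z)) (B z.2) ≠ 0
  nb3 : ∀ z ∈ Ω, D3 (C (g z)) (C1 (g z)) (A z.1) ≠ 0
  nV1 : ∀ z ∈ Ω, D3 (A z.1) (V1 z.1) (A1 z.1) ≠ 0
  nV2 : ∀ z ∈ Ω, D3 (B z.2) (V2 z.2) (B1 z.2) ≠ 0
  nV3 : ∀ z ∈ Ω, D3 (C (g z)) (V3 (g z)) (C1 (g z)) ≠ 0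
  F1 : ∀ z ∈ Ω, D3 (A z.1) (A1 z.1) (B z.2) * D3 (A z.1) (V1 z.1) (C (g z))
    + D3 (A z.1) (A1 z.1) (C (g z)) * D3 (A z.1) (V1 z.1) (B z.2) = 0
  F2 : ∀ z ∈ Ω, D3 (B z.2) (B1 z.2) (C (g z)) * D3 (B z.2) (V2 z.2) (A z.1)
    + D3 (B z.2) (B1 z.2) (A z.1) * D3 (B z.2) (V2 z.2) (C (g z)) = 0
  F3 : ∀ z ∈ Ω, D3 (C (g z)) (C1 (g z)) (A z.1) * D3 (C (g z)) (V3 (g z)) (B z.2)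
    + D3 (C (g z)) (C1 (g z)) (B z.2) * D3 (C (g z)) (V3 (g z)) (A z.1) = 0

section
variable {A A1 A2 B B1 B2 C C1 C2 V1 V2 V3 W3 : ℝ → ℝ × ℝ × ℝ} {Ω : Set (ℝ × ℝ)}
  {g : ℝ × ℝ → ℝ}

/-- first-order relations -/
theorem LocalData.first (h : LocalData A A1 A2 B B1 B2 C C1 C2 V1 V2 V3 W3 Ω g)
    {z : ℝ × ℝ} (hz : z ∈ Ω) :
    (D3 (A z.1) (A1 z.1) (C (g z)) ^ 2 * D3 (B z.2) (B1 z.2) (A z.1) +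
      D3 (A z.1) (A1 z.1) (B z.2) ^ 2 * D3 (C (g z)) (C1 (g z)) (A z.1) * pU g z = 0) ∧
    (D3 (B z.2) (B1 z.2) (C (g z)) ^ 2 * D3 (A z.1) (A1 z.1) (B z.2) +
      D3 (B z.2) (B1 z.2) (A z.1) ^ 2 * D3 (C (g z)) (C1 (g z)) (B z.2) * pS g z = 0) ∧
    D3 (B z.2) (B1 z.2) (C (g z)) * D3 (A z.1) (A1 z.1) (B z.2) * D3 (C (g z)) (C1 (g z)) (A z.1)
      = D3 (A z.1) (A1 z.1) (C (g z)) * D3 (B z.2) (B1 z.2) (A z.1)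
        * D3 (C (g z)) (C1 (g z)) (B z.2) := by
  have dS := pS_hasDerivAt (h.g2 z hz)
  have dU := pU_hasDerivAt (h.g2 z hz)
  have cA := hasDerivAt_const z.2 (A z.1)
  have cA1 := hasDerivAt_const z.2 (A1 z.1)
  have cV1 := hasDerivAt_const z.2 (V1 z.1)
  have cB := hasDerivAt_const z.1 (B z.2)
  have cB1 := hasDerivAt_const z.1 (B1 z.2)
  have cV2 := hasDerivAt_const z.1 (V2 z.2)
  have CU : HasDerivAt (fun r => C (g (z.1, r))) (pU g z • C1 (g z)) z.2 :=
    HasDerivAt.scomp z.2 (h.hC z hz) dU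
  have CS : HasDerivAt (fun r => C (g (r, z.2))) (pS g z • C1 (g z)) z.1 :=
    HasDerivAt.scomp z.1 (h.hC z hz) dS
  have C1U : HasDerivAt (fun r => C1 (g (z.1, r))) (pU g z • C2 (g z)) z.2 :=
    HasDerivAt.scomp z.2 (h.hC1 z hz) dU
  have C1S : HasDerivAt (fun r => C1 (g (r, z.2))) (pS g z • C2 (g z)) z.1 :=
    HasDerivAt.scomp z.1 (h.hC1 z hz) dS
  have V3U : HasDerivAt (fun r => V3 (g (z.1, r))) (pU g z • W3 (g z)) z.2 :=
    HasDerivAt.scomp z.2 (h.hV3 z hz) dU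
  have V3S : HasDerivAt (fun r => V3 (g (r, z.2))) (pS g z • W3 (g z)) z.1 :=
    HasDerivAt.scomp z.1 (h.hV3 z hz) dS
  have hA := h.hA z hz
  have hB := h.hB z hz
  have e1 := deriv_zero_of_ev (((D3_hasDerivAt cA cA1 hB).mul (D3_hasDerivAt cA cV1 CU)).add
    ((D3_hasDerivAt cA cA1 CU).mul (D3_hasDerivAt cA cV1 hB)))
    ((slice_snd h.op hz).mono fun r hr => h.F1 _ hr)
  have e2 := deriv_zero_of_ev (((D3_hasDerivAt cB cB1 CS).mul (D3_hasDerivAt cB cV2 hA)).add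
    ((D3_hasDerivAt cB cB1 hA).mul (D3_hasDerivAt cB cV2 CS)))
    ((slice_fst h.op hz).mono fun r hr => h.F2 _ hr)
  have e3 := deriv_zero_of_ev (((D3_hasDerivAt CS C1S hA).mul (D3_hasDerivAt CS V3S cB)).add
    ((D3_hasDerivAt CS C1S cB).mul (D3_hasDerivAt CS V3S hA)))
    ((slice_fst h.op hz).mono fun r hr => h.F3 _ hr)
  have e4 := deriv_zero_of_ev (((D3_hasDerivAt CU C1U cA).mul (D3_hasDerivAt CU V3U hB)).add
    ((D3_hasDerivAt CU C1U hB).mul (D3_hasDerivAt CU V3U cA)))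
    ((slice_snd h.op hz).mono fun r hr => h.F3 _ hr)
  simp only [Prod.mk.eta, D3_smul_1, D3_smul_2, D3_smul_3, D3_zero_1, D3_zero_2, D3_zero_3]
    at e1 e2 e3 e4
  have hD := h.hD z hz
  have r1 := refl_deriv (β := 1) (γ := pU g z) (B' := B1 z.2) (C' := C1 (g z)) hD (h.nc1 z hz)
    (h.nV1 z hz) (h.F1 z hz) (by linear_combination e1)
  have r2 := refl_deriv (β := pS g z) (γ := 1) (B' := C1 (g z)) (C' := A1 z.1)
    (by rw [D3_cyc]; exact hD) (h.na2 z hz)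
    (h.nV2 z hz) (h.F2 z hz) (by linear_combination e2)
  have r3 := refl_deriv (β := pU g z) (γ := - pS g z) (B' := A1 z.1) (C' := B1 z.2)
    (by rw [← D3_cyc]; exact hD) (h.nb3 z hz)
    (h.nV3 z hz) (h.F3 z hz) (by linear_combination pU g z * e3 - pS g z * e4)
  have f1 : D3 (A z.1) (A1 z.1) (C (g z)) ^ 2 * D3 (B z.2) (B1 z.2) (A z.1) +
      D3 (A z.1) (A1 z.1) (B z.2) ^ 2 * D3 (C (g z)) (C1 (g z)) (A z.1) * pU g z = 0 := by
    linear_combination r1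
  have f2 : D3 (B z.2) (B1 z.2) (C (g z)) ^ 2 * D3 (A z.1) (A1 z.1) (B z.2) +
      D3 (B z.2) (B1 z.2) (A z.1) ^ 2 * D3 (C (g z)) (C1 (g z)) (B z.2) * pS g z = 0 := by
    linear_combination r2
  exact ⟨f1, f2, scalar_first f1 f2 (by linear_combination r3)⟩

theorem LocalData.pS_ne (h : LocalData A A1 A2 B B1 B2 C C1 C2 V1 V2 V3 W3 Ω g)
    {z : ℝ × ℝ} (hz : z ∈ Ω) : pS g z ≠ 0 := by
  intro h0
  have := (h.first hz).2.1
  rw [h0, mul_zero, add_zero] at this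
  have h1 := h.na2 z hz
  have h2 := h.nc1 z hz
  simp_all

/-- second-order relations: the three curves have zero curvature. -/
theorem LocalData.second (h : LocalData A A1 A2 B B1 B2 C C1 C2 V1 V2 V3 W3 Ω g)
    {z : ℝ × ℝ} (hz : z ∈ Ω) :
    D3 (A z.1) (A1 z.1) (A2 z.1) = 0 ∧ D3 (B z.2) (B1 z.2) (B2 z.2) = 0 ∧
    D3 (C (g z)) (C1 (g z)) (C2 (g z)) = 0 := by
  have dS := pS_hasDerivAt (h.g2 z hz)
  have dU := pU_hasDerivAt (h.g2 z hz)
  obtain ⟨G, dSU, dUS⟩ := mixed (h.g2 z hz)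
  have cA := hasDerivAt_const z.2 (A z.1)
  have cA1 := hasDerivAt_const z.2 (A1 z.1)
  have cB := hasDerivAt_const z.1 (B z.2)
  have cB1 := hasDerivAt_const z.1 (B1 z.2)
  have CU : HasDerivAt (fun r => C (g (z.1, r))) (pU g z • C1 (g z)) z.2 :=
    HasDerivAt.scomp z.2 (h.hC z hz) dU
  have CS : HasDerivAt (fun r => C (g (r, z.2))) (pS g z • C1 (g z)) z.1 :=
    HasDerivAt.scomp z.1 (h.hC z hz) dS
  have C1U : HasDerivAt (fun r => C1 (g (z.1, r))) (pU g z • C2 (g z)) z.2 :=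
    HasDerivAt.scomp z.2 (h.hC1 z hz) dU
  have C1S : HasDerivAt (fun r => C1 (g (r, z.2))) (pS g z • C2 (g z)) z.1 :=
    HasDerivAt.scomp z.1 (h.hC1 z hz) dS
  have hA := h.hA z hz
  have hB := h.hB z hz
  have hA1 := h.hA1 z hz
  have hB1 := h.hB1 z hz
  have c1u := D3_hasDerivAt cA cA1 hB
  have c1s := D3_hasDerivAt hA hA1 cB
  have b1u := D3_hasDerivAt cA cA1 CU
  have b1s := D3_hasDerivAt hA hA1 CS
  have c2u := D3_hasDerivAt hB hB1 cA
  have c2s := D3_hasDerivAt cB cB1 hA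
  have a2u := D3_hasDerivAt hB hB1 CU
  have a2s := D3_hasDerivAt cB cB1 CS
  have a3u := D3_hasDerivAt CU C1U hB
  have a3s := D3_hasDerivAt CS C1S cB
  have b3u := D3_hasDerivAt CU C1U cA
  have b3s := D3_hasDerivAt CS C1S hA
  have Ks := deriv_zero_of_ev (((a2s.mul c1s).mul b3s).sub ((b1s.mul c2s).mul a3s))
    ((slice_fst h.op hz).mono fun r hr => sub_eq_zero.mpr (h.first hr).2.2)
  have Ku := deriv_zero_of_ev (((a2u.mul c1u).mul b3u).sub ((b1u.mul c2u).mul a3u))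
    ((slice_snd h.op hz).mono fun r hr => sub_eq_zero.mpr (h.first hr).2.2)
  have h1s := deriv_zero_of_ev (((b1s.pow 2).mul c2s).add (((c1s.pow 2).mul b3s).mul dUS))
    ((slice_fst h.op hz).mono fun r hr => (h.first hr).1)
  have h2u := deriv_zero_of_ev (((a2u.pow 2).mul c1u).add (((c2u.pow 2).mul a3u).mul dSU))
    ((slice_snd h.op hz).mono fun r hr => (h.first hr).2.1)
  clear c1u c1s b1u b1s c2u c2s a2u a2s a3u a3s b3u b3s
  simp only [Prod.mk.eta, D3_smul_1, D3_smul_2, D3_smul_3, D3_zero_1, D3_zero_2, D3_zero_3,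
    D3_self12, D3_self13, D3_self23, zero_add, add_zero, mul_zero, Pi.mul_apply, Pi.pow_apply]
    at Ks Ku h1s h2u
  have hD := h.hD z hz
  obtain ⟨f1, f2, f3⟩ := h.first hz
  have na2 := h.na2 z hz
  have na3 := h.na3 z hz
  have nb1 := h.nb1 z hz
  have nb3 := h.nb3 z hz
  have nc1 := h.nc1 z hz
  have nc2 := h.nc2 z hz
  generalize pS g z = gs at *
  generalize pU g z = gu at *
  generalize A z.1 = A₀ at *
  generalize A1 z.1 = A₁ at *
  generalize A2 z.1 = A₂ at *
  generalize B z.2 = B₀ at *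
  generalize B1 z.2 = B₁ at *
  generalize B2 z.2 = B₂ at *
  generalize C (g z) = C₀ at *
  generalize C1 (g z) = C₁ at *
  generalize C2 (g z) = C₂ at *
  clear dS dU dSU dUS cA cA1 cB cB1 CU CS C1U C1S hA hB hA1 hB1
  have hDi : D3 A₀ B₀ C₀ * (D3 A₀ B₀ C₀)⁻¹ = 1 := mul_inv_cancel₀ hD
  set E := (D3 A₀ B₀ C₀)⁻¹ with hE
  have key : ∀ x y : ℝ, D3 A₀ B₀ C₀ * x = y → x = y * E := by
    intro x y hxy; rw [hE, ← hxy]; field_simp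
  have i1 : D3 A₀ A₁ B₁ = (D3 A₀ B₁ C₀ * D3 A₀ A₁ B₀ + D3 B₀ B₁ A₀ * D3 A₀ A₁ C₀) * E :=
    key _ _ (by simp only [D3]; ring)
  have i2 : D3 A₀ A₁ C₁ = (D3 A₀ B₀ C₁ * D3 A₀ A₁ C₀ - D3 C₀ C₁ A₀ * D3 A₀ A₁ B₀) * E :=
    key _ _ (by simp only [D3]; ring)
  have i3 : D3 B₀ B₁ A₁ = (D3 A₁ B₀ C₀ * D3 B₀ B₁ A₀ - D3 A₀ A₁ B₀ * D3 B₀ B₁ C₀) * E :=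
    key _ _ (by simp only [D3]; ring)
  have i4 : D3 B₀ B₁ C₁ = (D3 A₀ B₀ C₁ * D3 B₀ B₁ C₀ + D3 C₀ C₁ B₀ * D3 B₀ B₁ A₀) * E :=
    key _ _ (by simp only [D3]; ring)
  have i5 : D3 C₀ C₁ B₁ = (D3 A₀ B₁ C₀ * D3 C₀ C₁ B₀ - D3 B₀ B₁ C₀ * D3 C₀ C₁ A₀) * E :=
    key _ _ (by simp only [D3]; ring)
  have i6 : D3 C₀ C₁ A₁ = (D3 A₁ B₀ C₀ * D3 C₀ C₁ A₀ + D3 A₀ A₁ C₀ * D3 C₀ C₁ B₀) * E :=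
    key _ _ (by simp only [D3]; ring)
  obtain ⟨k1, k2, k3⟩ := scalar_second (p1 := D3 A₀ A₂ B₀) (q1 := D3 A₀ A₂ C₀)
    (p2 := D3 B₀ B₂ C₀) (q2 := D3 B₀ B₂ A₀) (p3 := D3 C₀ C₂ A₀) (q3 := D3 C₀ C₂ B₀) (G := G)
    (c1u := D3 A₀ A₁ B₁) (b1u := gu * D3 A₀ A₁ C₁) (b1s := D3 A₀ A₂ C₀ + gs * D3 A₀ A₁ C₁)
    (c2s := D3 B₀ B₁ A₁) (a2s := gs * D3 B₀ B₁ C₁) (a2u := D3 B₀ B₂ C₀ + gu * D3 B₀ B₁ C₁)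
    (a3u := gu * D3 C₀ C₂ B₀ + D3 C₀ C₁ B₁) (b3s := gs * D3 C₀ C₂ A₀ + D3 C₀ C₁ A₁)
    na2 na3 nb1 nb3 nc1 nc2 i1 rfl (congrArg (gu * ·) i2)
    (congrArg (D3 A₀ A₂ C₀ + gs * ·) i2) i3 rfl (congrArg (gs * ·) i4)
    (congrArg (D3 B₀ B₂ C₀ + gu * ·) i4) rfl (congrArg (gu * D3 C₀ C₂ B₀ + ·) i5)
    (congrArg (gs * D3 C₀ C₂ A₀ + ·) i6) rfl f1 f2 f3
    (by linear_combination Ks) (by linear_combination Ku) (by linear_combination h1s)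
    (by linear_combination h2u)
  refine ⟨?_, ?_, ?_⟩
  · refine (mul_eq_zero.mp (?_ : D3 A₀ B₀ C₀ * _ = 0)).resolve_left hD
    rw [← k1]; simp only [D3]; ring
  · refine (mul_eq_zero.mp (?_ : D3 A₀ B₀ C₀ * _ = 0)).resolve_left hD
    rw [← k2]; simp only [D3]; ring
  · refine (mul_eq_zero.mp (?_ : D3 A₀ B₀ C₀ * _ = 0)).resolve_left hD
    rw [← k3]; simp only [D3]; ring

end

open Filter Topology in
/-- Regularity of `g` by the implicit function theorem. -/
theorem g_contDiffAt {A A1 V B C : ℝ → ℝ × ℝ × ℝ} {C1 : ℝ × ℝ × ℝ} {Ω : Set (ℝ × ℝ)}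
    {g : ℝ × ℝ → ℝ} (hΩ : IsOpen Ω) (hg : ContinuousOn g Ω) {z : ℝ × ℝ} (hz : z ∈ Ω)
    (hA : ContDiffAt ℝ 2 A z.1) (hA1 : ContDiffAt ℝ 2 A1 z.1) (hV : ContDiffAt ℝ 2 V z.1)
    (hB : ContDiffAt ℝ 2 B z.2) (hC : ContDiffAt ℝ 2 C (g z)) (hC1 : HasDerivAt C C1 (g z))
    (hF : ∀ w ∈ Ω, D3 (A w.1) (A1 w.1) (B w.2) * D3 (A w.1) (V w.1) (C (g w))
      + D3 (A w.1) (A1 w.1) (C (g w)) * D3 (A w.1) (V w.1) (B w.2) = 0)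
    (hT : D3 (A z.1) (A1 z.1) (B z.2) * D3 (A z.1) (V z.1) C1
      + D3 (A z.1) (A1 z.1) C1 * D3 (A z.1) (V z.1) (B z.2) ≠ 0) :
    ContDiffAt ℝ 2 g z := by
  set f : (ℝ × ℝ) × ℝ → ℝ := fun p =>
    D3 (A p.1.1) (A1 p.1.1) (B p.1.2) * D3 (A p.1.1) (V p.1.1) (C p.2)
      + D3 (A p.1.1) (A1 p.1.1) (C p.2) * D3 (A p.1.1) (V p.1.1) (B p.1.2) with hf
  have k1 : ∀ {X : ℝ → ℝ × ℝ × ℝ}, ContDiffAt ℝ 2 X z.1 →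
      ContDiffAt ℝ 2 (fun p : (ℝ × ℝ) × ℝ => X p.1.1) (z, g z) := fun {X} h =>
    ContDiffAt.comp (z, g z) (g := X) (f := fun p : (ℝ × ℝ) × ℝ => p.1.1) h (by fun_prop)
  have k2 : ∀ {X : ℝ → ℝ × ℝ × ℝ}, ContDiffAt ℝ 2 X z.2 →
      ContDiffAt ℝ 2 (fun p : (ℝ × ℝ) × ℝ => X p.1.2) (z, g z) := fun {X} h =>
    ContDiffAt.comp (z, g z) (g := X) (f := fun p : (ℝ × ℝ) × ℝ => p.1.2) h (by fun_prop)
  have k3 : ∀ {X : ℝ → ℝ × ℝ × ℝ}, ContDiffAt ℝ 2 X (g z) →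
      ContDiffAt ℝ 2 (fun p : (ℝ × ℝ) × ℝ => X p.2) (z, g z) := fun {X} h =>
    ContDiffAt.comp (z, g z) (g := X) (f := fun p : (ℝ × ℝ) × ℝ => p.2) h (by fun_prop)
  have kD : ∀ {X Y Z : (ℝ × ℝ) × ℝ → ℝ × ℝ × ℝ}, ContDiffAt ℝ 2 X (z, g z) →
      ContDiffAt ℝ 2 Y (z, g z) → ContDiffAt ℝ 2 Z (z, g z) →
      ContDiffAt ℝ 2 (fun p => D3 (X p) (Y p) (Z p)) (z, g z) := by
    intro X Y Z hX hY hZ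
    unfold D3
    have := hX.fst
    fun_prop
  have cdf : ContDiffAt ℝ 2 f (z, g z) :=
    ((kD (k1 hA) (k1 hA1) (k2 hB)).mul (kD (k1 hA) (k1 hV) (k3 hC))).add
      ((kD (k1 hA) (k1 hA1) (k3 hC)).mul (kD (k1 hA) (k1 hV) (k2 hB)))
  have hd : HasDerivAt (fun r => f (z, r)) (D3 (A z.1) (A1 z.1) (B z.2) * D3 (A z.1) (V z.1) C1
      + D3 (A z.1) (A1 z.1) C1 * D3 (A z.1) (V z.1) (B z.2)) (g z) := by
    have cA := hasDerivAt_const (g z) (A z.1)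
    have cA1 := hasDerivAt_const (g z) (A1 z.1)
    have cV := hasDerivAt_const (g z) (V z.1)
    have cB := hasDerivAt_const (g z) (B z.2)
    refine (((D3_hasDerivAt cA cA1 cB).mul (D3_hasDerivAt cA cV hC1)).add
      ((D3_hasDerivAt cA cA1 hC1).mul (D3_hasDerivAt cA cV cB))).congr_deriv ?_
    simp only [D3_zero_1, D3_zero_2, D3_zero_3]; ring
  have hd2 : HasDerivAt (fun r => f (z, r)) (fderiv ℝ f (z, g z) (0, 1)) (g z) :=
    (cdf.differentiableAt (by norm_num)).hasFDerivAt.comp_hasDerivAt (g z)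
      ((hasDerivAt_const (g z) z).prodMk (hasDerivAt_id (g z)))
  have hne : fderiv ℝ f (z, g z) (0, 1) ≠ 0 := by rw [hd2.unique hd]; exact hT
  have hinv : (fderiv ℝ f (z, g z) ∘L ContinuousLinearMap.inr ℝ (ℝ × ℝ) ℝ).IsInvertible := by
    refine ⟨ContinuousLinearEquiv.unitsEquivAut ℝ (Units.mk0 _ hne), ?_⟩
    ext
    simp
  have hev := cdf.eventually_apply_eq_iff_implicitFunction (by norm_num) hinv
  have hgz : ContinuousAt g z := hg.continuousAt (hΩ.mem_nhds hz)
  have htend : Tendsto (fun w => (w, g w)) (𝓝 z) (𝓝 (z, g z)) :=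
    (continuousAt_id.prodMk hgz)
  refine (cdf.contDiffAt_implicitFunction (by norm_num) hinv).congr_of_eventuallyEq ?_
  filter_upwards [htend.eventually hev, hΩ.mem_nhds hz] with w hw hwΩ
  refine (hw.mp ?_).symm
  exact (hF w hwΩ).trans (hF z hz).symm

open Filter Topology in
/-- An analytic regular curve with curvature zero near a point lies on a line. -/
theorem curve_on_line {a : ℝ → ℝ × ℝ} {U : Set ℝ} (hU : IsOpen U) (hc : IsPreconnected U)
    (ha : AnalyticOnNhd ℝ a U) {t₀ : ℝ} (ht₀ : t₀ ∈ U) (h0 : deriv a t₀ ≠ 0)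
    (hk : ∀ᶠ t in 𝓝 t₀, (deriv a t).1 * (deriv (deriv a) t).2
      - (deriv a t).2 * (deriv (deriv a) t).1 = 0) :
    ∀ t ∈ U, ((a t).1 - (a t₀).1) * (deriv a t₀).2 - ((a t).2 - (a t₀).2) * (deriv a t₀).1 = 0 ∧
      (deriv a t).1 * (deriv a t₀).2 - (deriv a t).2 * (deriv a t₀).1 = 0 := by
  set w := deriv a t₀ with hw
  have hd : AnalyticOnNhd ℝ (deriv a) U := ha.deriv
  have had : ∀ t ∈ U, HasDerivAt a (deriv a t) t := fun t ht =>
    (ha t ht).differentiableAt.hasDerivAt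
  have hdd : ∀ t ∈ U, HasDerivAt (deriv a) (deriv (deriv a) t) t := fun t ht =>
    (hd t ht).differentiableAt.hasDerivAt
  -- the tangent direction is locally constant
  have hpos : 0 < w.1 * w.1 + w.2 * w.2 := by
    rcases eq_or_ne w.1 0 with h1 | h1
    · have h2 : w.2 ≠ 0 := fun h2 => h0 (Prod.ext h1 h2)
      nlinarith [mul_self_pos.mpr h2, mul_self_nonneg w.1]
    · nlinarith [mul_self_pos.mpr h1, mul_self_nonneg w.2]
  have hev : ∀ᶠ t in 𝓝 t₀, 0 < (deriv a t).1 * w.1 + (deriv a t).2 * w.2 := by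
    have hcont : ContinuousAt (fun t => (deriv a t).1 * w.1 + (deriv a t).2 * w.2) t₀ := by
      have := (hdd t₀ ht₀).continuousAt
      fun_prop
    exact hcont.eventually (lt_mem_nhds hpos)
  have hW : ∀ᶠ t in 𝓝 t₀, (deriv a t).1 * w.2 - (deriv a t).2 * w.1 = 0 := by
    obtain ⟨ε, hε, hball⟩ := Metric.eventually_nhds_iff_ball.mp
      (hev.and (hk.and (hU.mem_nhds ht₀)))
    set q : ℝ → ℝ := fun t => ((deriv a t).1 * w.2 - (deriv a t).2 * w.1) /
      ((deriv a t).1 * w.1 + (deriv a t).2 * w.2) with hq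
    have hqd : ∀ t ∈ Metric.ball t₀ ε, HasDerivAt q 0 t := by
      intro t ht
      obtain ⟨b1, b2, b3⟩ := hball t ht
      have d1 : HasDerivAt (fun x => (deriv a x).1) (deriv (deriv a) t).1 t := (hdd t b3).fst
      have d2 : HasDerivAt (fun x => (deriv a x).2) (deriv (deriv a) t).2 t := (hdd t b3).snd
      refine (((d1.mul_const w.2).sub (d2.mul_const w.1)).div
        ((d1.mul_const w.1).add (d2.mul_const w.2)) b1.ne').congr_deriv ?_
      rw [div_eq_zero_iff]; left
      simp only [Pi.sub_apply, Pi.add_apply]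
      linear_combination (-(w.1 * w.1 + w.2 * w.2)) * b2
    have hconst : ∀ t ∈ Metric.ball t₀ ε, q t = q t₀ := by
      intro t ht
      refine (convex_ball t₀ ε).is_const_of_fderivWithin_eq_zero (𝕜 := ℝ) (f := q)
        (fun x hx => (hqd x hx).differentiableAt.differentiableWithinAt) ?_ ht
        (Metric.mem_ball_self hε)
      intro x hx
      rw [fderivWithin_of_isOpen Metric.isOpen_ball hx]
      ext
      simp [(hqd x hx).deriv]
    refine Metric.eventually_nhds_iff_ball.mpr ⟨ε, hε, fun t ht => ?_⟩
    have h1 := hconst t ht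
    have h2 : q t₀ = 0 := by simp only [hq, ← hw]; rw [mul_comm w.2]; simp
    rw [h2] at h1
    exact (div_eq_zero_iff.mp h1).resolve_right (hball t ht).1.ne'
  have hd1 : AnalyticOnNhd ℝ (fun t => (deriv a t).1) U := fun t ht =>
    ((ContinuousLinearMap.fst ℝ ℝ ℝ).analyticAt _).comp (hd t ht)
  have hd2 : AnalyticOnNhd ℝ (fun t => (deriv a t).2) U := fun t ht =>
    ((ContinuousLinearMap.snd ℝ ℝ ℝ).analyticAt _).comp (hd t ht)
  have ha1 : AnalyticOnNhd ℝ (fun t => (a t).1) U := fun t ht =>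
    ((ContinuousLinearMap.fst ℝ ℝ ℝ).analyticAt _).comp (ha t ht)
  have ha2 : AnalyticOnNhd ℝ (fun t => (a t).2) U := fun t ht =>
    ((ContinuousLinearMap.snd ℝ ℝ ℝ).analyticAt _).comp (ha t ht)
  have hWall : Set.EqOn (fun t => (deriv a t).1 * w.2 - (deriv a t).2 * w.1) 0 U :=
    AnalyticOnNhd.eqOn_zero_of_preconnected_of_eventuallyEq_zero
      ((hd1.mul analyticOnNhd_const).sub (hd2.mul analyticOnNhd_const)) hc ht₀ hW
  set f : ℝ → ℝ := fun t => ((a t).1 - (a t₀).1) * w.2 - ((a t).2 - (a t₀).2) * w.1 with hf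
  have hfd : ∀ t ∈ U, HasDerivAt f 0 t := by
    intro t ht
    have d1 : HasDerivAt (fun x => (a x).1) (deriv a t).1 t := (had t ht).fst
    have d2 : HasDerivAt (fun x => (a x).2) (deriv a t).2 t := (had t ht).snd
    refine (((d1.sub_const _).mul_const _).sub
      ((d2.sub_const _).mul_const _)).congr_deriv ?_
    exact hWall ht
  intro t ht
  refine ⟨?_, hWall ht⟩
  have hconst := hU.is_const_of_deriv_eq_zero hc
    (fun x hx => (hfd x hx).differentiableAt.differentiableWithinAt)
    (fun x hx => (hfd x hx).deriv) ht ht₀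
  have h2 : f t₀ = 0 := by simp [hf]
  rw [h2] at hconst
  exact hconst

theorem D3_lift_PDP (a x b : ℝ × ℝ) : D3 (liftPt ℝ a) (liftDir ℝ x) (liftPt ℝ b)
    = x.1 * (b - a).2 - x.2 * (b - a).1 := by
  simp only [D3, liftPt, liftDir, Prod.fst_sub, Prod.snd_sub]; ring

theorem D3_lift_PDD (a x y : ℝ × ℝ) : D3 (liftPt ℝ a) (liftDir ℝ x) (liftDir ℝ y)
    = x.1 * y.2 - x.2 * y.1 := by
  simp only [D3, liftPt, liftDir]; ring

theorem sq_pos_of_ne {w : ℝ × ℝ} (hw : w ≠ 0) : 0 < w.1 * w.1 + w.2 * w.2 := by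
  rcases eq_or_ne w.1 0 with h1 | h1
  · have h2 : w.2 ≠ 0 := fun h2 => hw (Prod.ext h1 h2)
    nlinarith [mul_self_pos.mpr h2, mul_self_nonneg w.1]
  · nlinarith [mul_self_pos.mpr h1, mul_self_nonneg w.2]

theorem exists_smul_of_det {w x : ℝ × ℝ} (hw : w ≠ 0) (h : w.1 * x.2 - w.2 * x.1 = 0) :
    ∃ c : ℝ, c • w = x := by
  have hp := (sq_pos_of_ne hw).ne'
  refine ⟨(x.1 * w.1 + x.2 * w.2) / (w.1 * w.1 + w.2 * w.2), Prod.ext ?_ ?_⟩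
  · simp only [Prod.smul_fst, smul_eq_mul]
    rw [div_mul_eq_mul_div, div_eq_iff hp]
    linear_combination w.2 * h
  · simp only [Prod.smul_snd, smul_eq_mul]
    rw [div_mul_eq_mul_div, div_eq_iff hp]
    linear_combination (-w.1) * h

theorem det_ne_of_not_mem {w x : ℝ × ℝ} (hw : w ≠ 0) (h : x ∉ Submodule.span ℝ {w}) :
    w.1 * x.2 - w.2 * x.1 ≠ 0 := fun h0 =>
  h (Submodule.mem_span_singleton.mpr (exists_smul_of_det hw h0))

theorem planeSym_det {v τ u w : ℝ × ℝ} (h : PlaneSym ℝ v τ u w) :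
    (τ.1 * u.2 - τ.2 * u.1) * (v.1 * w.2 - v.2 * w.1)
      + (τ.1 * w.2 - τ.2 * w.1) * (v.1 * u.2 - v.2 * u.1) = 0 := by
  obtain ⟨p, q, hp, hq, h1, h2⟩ := h
  obtain ⟨c, hc⟩ := Submodule.mem_span_singleton.mp h1
  obtain ⟨d, hd⟩ := Submodule.mem_span_singleton.mp h2
  have c1 := congrArg Prod.fst hc
  have c2 := congrArg Prod.snd hc
  have d1 := congrArg Prod.fst hd
  have d2 := congrArg Prod.snd hd
  simp only [Prod.smul_fst, Prod.smul_snd, Prod.fst_add, Prod.snd_add, Prod.fst_sub, Prod.snd_sub,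
    smul_eq_mul] at c1 c2 d1 d2
  have e1 : p * (τ.1 * u.2 - τ.2 * u.1) + q * (τ.1 * w.2 - τ.2 * w.1) = 0 := by
    linear_combination τ.2 * c1 - τ.1 * c2
  have e2 : p * (v.1 * u.2 - v.2 * u.1) - q * (v.1 * w.2 - v.2 * w.1) = 0 := by
    linear_combination v.2 * d1 - v.1 * d2
  refine (mul_eq_zero.mp (?_ : p * _ = 0)).resolve_left hp
  linear_combination (v.1 * w.2 - v.2 * w.1) * e1 + (τ.1 * w.2 - τ.2 * w.1) * e2

theorem D3_ne_of_not_collinear {a b c : ℝ × ℝ} (h : ¬ Collinear ℝ {a, b, c}) :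
    D3 (liftPt ℝ a) (liftPt ℝ b) (liftPt ℝ c) ≠ 0 := by
  intro h0
  apply h
  have h1 : (b - a).1 * (c - a).2 - (b - a).2 * (c - a).1 = 0 := by
    rw [← h0]
    simp only [D3, liftPt, Prod.fst_sub, Prod.snd_sub]; ring
  rw [collinear_iff_of_mem (p₀ := a) (by simp)]
  by_cases hb : b - a = 0
  · refine ⟨c - a, ?_⟩
    intro p hp
    simp only [Set.mem_insert_iff, Set.mem_singleton_iff] at hp
    rcases hp with rfl | rfl | rfl
    · exact ⟨0, by simp⟩
    · exact ⟨0, by simpa [sub_eq_zero] using hb⟩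
    · exact ⟨1, by simp⟩
  · obtain ⟨r, hr⟩ := exists_smul_of_det hb h1
    refine ⟨b - a, ?_⟩
    intro p hp
    simp only [Set.mem_insert_iff, Set.mem_singleton_iff] at hp
    rcases hp with rfl | rfl | rfl
    · exact ⟨0, by simp⟩
    · exact ⟨1, by simp⟩
    · exact ⟨r, by rw [hr]; simp⟩

theorem analyticAt_fst' {a : ℝ → ℝ × ℝ} {s : ℝ} (h : AnalyticAt ℝ a s) :
    AnalyticAt ℝ (fun t => (a t).1) s := ((ContinuousLinearMap.fst ℝ ℝ ℝ).analyticAt _).comp h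

theorem analyticAt_snd' {a : ℝ → ℝ × ℝ} {s : ℝ} (h : AnalyticAt ℝ a s) :
    AnalyticAt ℝ (fun t => (a t).2) s := ((ContinuousLinearMap.snd ℝ ℝ ℝ).analyticAt _).comp h

theorem liftPt_analyticAt {a : ℝ → ℝ × ℝ} {s : ℝ} (h : AnalyticAt ℝ a s) :
    AnalyticAt ℝ (fun t => liftPt ℝ (a t)) s :=
  (analyticAt_fst' h).prod ((analyticAt_snd' h).prod analyticAt_const)

theorem liftDir_analyticAt {a : ℝ → ℝ × ℝ} {s : ℝ} (h : AnalyticAt ℝ a s) :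
    AnalyticAt ℝ (fun t => liftDir ℝ (a t)) s :=
  (analyticAt_fst' h).prod ((analyticAt_snd' h).prod analyticAt_const)

theorem liftPt_hasDerivAt {a : ℝ → ℝ × ℝ} {s : ℝ} (h : AnalyticAt ℝ a s) :
    HasDerivAt (fun t => liftPt ℝ (a t)) (liftDir ℝ (deriv a s)) s := by
  have h1 := h.differentiableAt.hasDerivAt
  have d1 : HasDerivAt (fun x => (a x).1) (deriv a s).1 s := h1.fst
  have d2 : HasDerivAt (fun x => (a x).2) (deriv a s).2 s := h1.snd
  exact d1.prodMk (d2.prodMk (hasDerivAt_const s 1))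

theorem liftDir_hasDerivAt {a : ℝ → ℝ × ℝ} {s : ℝ} (h : AnalyticAt ℝ a s) :
    HasDerivAt (fun t => liftDir ℝ (a t)) (liftDir ℝ (deriv a s)) s := by
  have h1 := h.differentiableAt.hasDerivAt
  have d1 : HasDerivAt (fun x => (a x).1) (deriv a s).1 s := h1.fst
  have d2 : HasDerivAt (fun x => (a x).2) (deriv a s).2 s := h1.snd
  exact d1.prodMk (d2.prodMk (hasDerivAt_const s 0))

/-- Cross product. -/
def cr (X Y : ℝ × ℝ × ℝ) : ℝ × ℝ × ℝ :=
  (X.2.1 * Y.2.2 - X.2.2 * Y.2.1, X.2.2 * Y.1 - X.1 * Y.2.2, X.1 * Y.2.1 - X.2.1 * Y.1)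

/-- Dot product. -/
def dt (X Y : ℝ × ℝ × ℝ) : ℝ := X.1 * Y.1 + X.2.1 * Y.2.1 + X.2.2 * Y.2.2

theorem dt_cr (X Y Z : ℝ × ℝ × ℝ) : dt (cr X Y) Z = D3 X Y Z := by
  simp only [dt, cr, D3]; ring

theorem dt_smul (c : ℝ) (X Y : ℝ × ℝ × ℝ) : dt (c • X) Y = c * dt X Y := by
  simp only [dt, Prod.smul_fst, Prod.smul_snd, smul_eq_mul]; ring

theorem mem_side {n1 n2 n3 X : ℝ × ℝ × ℝ} (hd : D3 n1 n2 n3 ≠ 0) (h : dt n1 X = 0) :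
    X ∈ Submodule.span ℝ {cr n3 n1, cr n1 n2} := by
  rw [Submodule.mem_span_pair]
  refine ⟨dt n2 X / D3 n1 n2 n3, dt n3 X / D3 n1 n2 n3, ?_⟩
  have key : ∀ a b x r : ℝ, a * dt n2 X + b * dt n3 X = D3 n1 n2 n3 * x →
      dt n2 X / D3 n1 n2 n3 * a + dt n3 X / D3 n1 n2 n3 * b = x := by
    intro a b x _ hh
    field_simp
    linear_combination hh
  refine Prod.ext ?_ (Prod.ext ?_ ?_)
  · simp only [Prod.fst_add, Prod.smul_fst, smul_eq_mul]
    refine key _ _ _ 0 ?_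
    simp only [dt, cr, D3] at h ⊢
    linear_combination -(n2.2.1 * n3.2.2 - n2.2.2 * n3.2.1) * h
  · simp only [Prod.fst_add, Prod.smul_fst, Prod.snd_add, Prod.smul_snd, smul_eq_mul]
    refine key _ _ _ 0 ?_
    simp only [dt, cr, D3] at h ⊢
    linear_combination -(n2.2.2 * n3.1 - n2.1 * n3.2.2) * h
  · simp only [Prod.snd_add, Prod.smul_snd, smul_eq_mul]
    refine key _ _ _ 0 ?_
    simp only [dt, cr, D3] at h ⊢
    linear_combination -(n2.1 * n3.2.1 - n2.2.1 * n3.1) * h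

theorem mem_field {R : ℝ × ℝ × ℝ} {a v : ℝ × ℝ} (hv : v ≠ 0)
    (h : D3 R (liftPt ℝ a) (liftDir ℝ v) = 0) :
    R ∈ Submodule.span ℝ {liftPt ℝ a, liftDir ℝ v} := by
  rw [Submodule.mem_span_pair]
  obtain ⟨c, hc⟩ := exists_smul_of_det (w := v)
    (x := (R.1 - R.2.2 * a.1, R.2.1 - R.2.2 * a.2)) hv (by
      simp only [D3, liftPt, liftDir] at h
      linear_combination h)
  have c1 := congrArg Prod.fst hc
  have c2 := congrArg Prod.snd hc
  simp only [Prod.smul_fst, Prod.smul_snd, smul_eq_mul] at c1 c2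
  refine ⟨R.2.2, c, Prod.ext ?_ (Prod.ext ?_ ?_)⟩
  · simp [liftPt, liftDir]; linear_combination c1
  · simp [liftPt, liftDir]; linear_combination c2
  · simp [liftPt, liftDir]

theorem linInd_of_D3 {P Q R : ℝ × ℝ × ℝ} (h : D3 P Q R ≠ 0) :
    LinearIndependent ℝ ![P, Q, R] := by
  rw [Fintype.linearIndependent_iff]
  intro c hc
  simp only [Fin.sum_univ_three, Matrix.cons_val_zero, Matrix.cons_val_one,
    Matrix.cons_val] at hc
  have e1 := congrArg Prod.fst hc
  have e2 := congrArg (fun x => x.2.1) hc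
  have e3 := congrArg (fun x => x.2.2) hc
  simp only [Prod.smul_fst, Prod.smul_snd, smul_eq_mul, Prod.fst_add, Prod.snd_add,
    Prod.fst_zero, Prod.snd_zero] at e1 e2 e3
  have k0 : D3 P Q R * c 0 = 0 := by
    simp only [D3]
    linear_combination (Q.2.1 * R.2.2 - Q.2.2 * R.2.1) * e1 + (Q.2.2 * R.1 - Q.1 * R.2.2) * e2
      + (Q.1 * R.2.1 - Q.2.1 * R.1) * e3
  have k1 : D3 P Q R * c 1 = 0 := by
    simp only [D3]
    linear_combination (R.2.1 * P.2.2 - R.2.2 * P.2.1) * e1 + (R.2.2 * P.1 - R.1 * P.2.2) * e2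
      + (R.1 * P.2.1 - R.2.1 * P.1) * e3
  have k2 : D3 P Q R * c 2 = 0 := by
    simp only [D3]
    linear_combination (P.2.1 * Q.2.2 - P.2.2 * Q.2.1) * e1 + (P.2.2 * Q.1 - P.1 * Q.2.2) * e2
      + (P.1 * Q.2.1 - P.2.1 * Q.1) * e3
  intro i
  fin_cases i
  · exact (mul_eq_zero.mp k0).resolve_left h
  · exact (mul_eq_zero.mp k1).resolve_left h
  · exact (mul_eq_zero.mp k2).resolve_left h

theorem D3_cr (n1 n2 n3 : ℝ × ℝ × ℝ) :
    D3 (cr n3 n1) (cr n1 n2) (cr n2 n3) = D3 n1 n2 n3 ^ 2 := by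
  simp only [D3, cr]; ring

theorem D3_normals (A A1 B B1 C C1 : ℝ × ℝ × ℝ) :
    D3 (cr A A1) (cr B B1) (cr C C1) * D3 A B C =
      D3 A A1 B * D3 B B1 C * D3 C C1 A + D3 A A1 C * D3 B B1 A * D3 C C1 B := by
  simp only [D3, cr]; ring

theorem D3_cr_first (n2 n3 A V : ℝ × ℝ × ℝ) :
    D3 (cr n2 n3) A V = dt n2 A * dt n3 V - dt n2 V * dt n3 A := by
  simp only [D3, cr, dt]; ring

/-- normals along a straight curve are proportional -/
theorem normal_prop {x x₀ w w₀ : ℝ × ℝ} (h0 : w₀ ≠ 0) (hw : w ≠ 0)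
    (h1 : (x.1 - x₀.1) * w₀.2 - (x.2 - x₀.2) * w₀.1 = 0)
    (h2 : w.1 * w₀.2 - w.2 * w₀.1 = 0) :
    ∃ ρ : ℝ, ρ ≠ 0 ∧ cr (liftPt ℝ x) (liftDir ℝ w) = ρ • cr (liftPt ℝ x₀) (liftDir ℝ w₀) := by
  obtain ⟨ρ, rfl⟩ := exists_smul_of_det h0 (by linear_combination -h2 : w₀.1 * w.2 - w₀.2 * w.1 = 0)
  refine ⟨ρ, fun h => hw (by rw [h, zero_smul]), ?_⟩
  refine Prod.ext ?_ (Prod.ext ?_ ?_)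
  · simp [cr, liftPt, liftDir]
  · simp [cr, liftPt, liftDir]
  · simp only [cr, liftPt, liftDir, Prod.smul_fst, Prod.smul_snd, smul_eq_mul]
    linear_combination ρ * h1

theorem dt_normal_zero {x x₀ w₀ : ℝ × ℝ}
    (h1 : (x.1 - x₀.1) * w₀.2 - (x.2 - x₀.2) * w₀.1 = 0) :
    dt (cr (liftPt ℝ x₀) (liftDir ℝ w₀)) (liftPt ℝ x) = 0 := by
  simp only [dt, cr, liftPt, liftDir]
  linear_combination -h1

open Filter Topology in
theorem field_half {U : Set ℝ} (hc : IsPreconnected U) {a v : ℝ → ℝ × ℝ}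
    (ha : AnalyticOnNhd ℝ a U) (hv : AnalyticOnNhd ℝ v U) (hv0 : ∀ s ∈ U, v s ≠ 0)
    {s₀ : ℝ} (hs₀ : s₀ ∈ U) {m n : ℝ × ℝ × ℝ}
    (h : ∀ᶠ s in 𝓝 s₀, dt m (liftPt ℝ (a s)) * dt n (liftDir ℝ (v s))
      - dt m (liftDir ℝ (v s)) * dt n (liftPt ℝ (a s)) = 0) :
    ∀ s ∈ U, cr m n ∈ Submodule.span ℝ {liftPt ℝ (a s), liftDir ℝ (v s)} := by
  intro s hs
  apply mem_field (hv0 s hs)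
  rw [D3_cr_first]
  have kd : ∀ (k : ℝ × ℝ × ℝ), AnalyticOnNhd ℝ (fun s => dt k (liftPt ℝ (a s))) U := by
    intro k x hx
    have h1 := analyticAt_fst' (ha x hx)
    have h2 := analyticAt_snd' (ha x hx)
    exact ((analyticAt_const.mul h1).add (analyticAt_const.mul h2)).add
      (analyticAt_const.mul analyticAt_const)
  have ke : ∀ (k : ℝ × ℝ × ℝ), AnalyticOnNhd ℝ (fun s => dt k (liftDir ℝ (v s))) U := by
    intro k x hx
    have h1 := analyticAt_fst' (hv x hx)
    have h2 := analyticAt_snd' (hv x hx)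
    exact ((analyticAt_const.mul h1).add (analyticAt_const.mul h2)).add
      (analyticAt_const.mul analyticAt_const)
  exact AnalyticOnNhd.eqOn_zero_of_preconnected_of_eventuallyEq_zero
    (((kd m).mul (ke n)).sub ((ke m).mul (kd n))) hc hs₀ h hs

open Filter Topology

/-- **Theorem 1.3, real analytic case.** Every 3-reflective triple of real analytic
line-framed curves in `ℝ²` is right-spherical. -/
theorem three_reflective_real_analytic_planar_is_right_spherical
    (U₁ U₂ U₃ : Set ℝ) (a₁ a₂ a₃ v₁ v₂ v₃ : ℝ → ℝ × ℝ)
    (hU₁o : IsOpen U₁) (hU₂o : IsOpen U₂) (hU₃o : IsOpen U₃)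
    (hU₁c : IsConnected U₁) (hU₂c : IsConnected U₂) (hU₃c : IsConnected U₃)
    -- the `(aᵢ, vᵢ)` are real analytic line-framed curves
    (ha₁ : AnalyticOnNhd ℝ a₁ U₁) (ha₂ : AnalyticOnNhd ℝ a₂ U₂)
    (ha₃ : AnalyticOnNhd ℝ a₃ U₃)
    (ha₁i : Set.InjOn a₁ U₁) (ha₂i : Set.InjOn a₂ U₂) (ha₃i : Set.InjOn a₃ U₃)
    (ha₁' : ∀ s ∈ U₁, deriv a₁ s ≠ 0) (ha₂' : ∀ u ∈ U₂, deriv a₂ u ≠ 0)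
    (ha₃' : ∀ t ∈ U₃, deriv a₃ t ≠ 0)
    (hv₁ : AnalyticOnNhd ℝ v₁ U₁) (hv₂ : AnalyticOnNhd ℝ v₂ U₂)
    (hv₃ : AnalyticOnNhd ℝ v₃ U₃)
    (hv₁t : ∀ s ∈ U₁, v₁ s ∉ Submodule.span ℝ {deriv a₁ s})
    (hv₂t : ∀ u ∈ U₂, v₂ u ∉ Submodule.span ℝ {deriv a₂ u})
    (hv₃t : ∀ t ∈ U₃, v₃ t ∉ Submodule.span ℝ {deriv a₃ t})
    -- 3-reflectivity data (Ω, g)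
    (Ω : Set (ℝ × ℝ)) (g : ℝ × ℝ → ℝ)
    (hΩo : IsOpen Ω) (hΩne : Ω.Nonempty) (hΩ : Ω ⊆ U₁ ×ˢ U₂)
    (hg : ContinuousOn g Ω) (hgm : ∀ z ∈ Ω, g z ∈ U₃)
    -- (i) vertices not collinear
    (hcol : ∀ z ∈ Ω, ¬ Collinear ℝ {a₁ z.1, a₂ z.2, a₃ (g z)})
    -- (ii) non-tangency
    (htan₁ : ∀ z ∈ Ω, a₂ z.2 - a₁ z.1 ∉ Submodule.span ℝ {deriv a₁ z.1} ∧
      a₃ (g z) - a₁ z.1 ∉ Submodule.span ℝ {deriv a₁ z.1})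
    (htan₂ : ∀ z ∈ Ω, a₁ z.1 - a₂ z.2 ∉ Submodule.span ℝ {deriv a₂ z.2} ∧
      a₃ (g z) - a₂ z.2 ∉ Submodule.span ℝ {deriv a₂ z.2})
    (htan₃ : ∀ z ∈ Ω, a₁ z.1 - a₃ (g z) ∉ Submodule.span ℝ {deriv a₃ (g z)} ∧
      a₂ z.2 - a₃ (g z) ∉ Submodule.span ℝ {deriv a₃ (g z)})
    -- (iii) reflection law at each vertex
    (href₁ : ∀ z ∈ Ω,
      PlaneSym ℝ (v₁ z.1) (deriv a₁ z.1) (a₂ z.2 - a₁ z.1) (a₃ (g z) - a₁ z.1))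
    (href₂ : ∀ z ∈ Ω,
      PlaneSym ℝ (v₂ z.2) (deriv a₂ z.2) (a₁ z.1 - a₂ z.2) (a₃ (g z) - a₂ z.2))
    (href₃ : ∀ z ∈ Ω,
      PlaneSym ℝ (v₃ (g z)) (deriv a₃ (g z)) (a₁ z.1 - a₃ (g z)) (a₂ z.2 - a₃ (g z))) :
    ∃ P Q R : ℝ × ℝ × ℝ, LinearIndependent ℝ ![P, Q, R] ∧
      (∀ s ∈ U₁, liftPt ℝ (a₁ s) ∈ Submodule.span ℝ {P, Q} ∧
        R ∈ Submodule.span ℝ {liftPt ℝ (a₁ s), liftDir ℝ (v₁ s)}) ∧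
      (∀ u ∈ U₂, liftPt ℝ (a₂ u) ∈ Submodule.span ℝ {Q, R} ∧
        P ∈ Submodule.span ℝ {liftPt ℝ (a₂ u), liftDir ℝ (v₂ u)}) ∧
      (∀ t ∈ U₃, liftPt ℝ (a₃ t) ∈ Submodule.span ℝ {R, P} ∧
        Q ∈ Submodule.span ℝ {liftPt ℝ (a₃ t), liftDir ℝ (v₃ t)}) := by
  obtain ⟨z₀, hz₀⟩ := hΩne
  have m1 : ∀ z ∈ Ω, z.1 ∈ U₁ := fun z hz => (hΩ hz).1
  have m2 : ∀ z ∈ Ω, z.2 ∈ U₂ := fun z hz => (hΩ hz).2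
  have hD : ∀ z ∈ Ω, D3 (liftPt ℝ (a₁ z.1)) (liftPt ℝ (a₂ z.2)) (liftPt ℝ (a₃ (g z))) ≠ 0 :=
    fun z hz => D3_ne_of_not_collinear (hcol z hz)
  have tn : ∀ {x w y : ℝ × ℝ}, w ≠ 0 → y - x ∉ Submodule.span ℝ {w} →
      D3 (liftPt ℝ x) (liftDir ℝ w) (liftPt ℝ y) ≠ 0 := by
    intro x w y hw h
    rw [D3_lift_PDP]
    exact det_ne_of_not_mem hw h
  have tv : ∀ {x w v : ℝ × ℝ}, w ≠ 0 → v ∉ Submodule.span ℝ {w} →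
      D3 (liftPt ℝ x) (liftDir ℝ v) (liftDir ℝ w) ≠ 0 := by
    intro x w v hw h
    rw [D3_swap, D3_lift_PDD]
    exact neg_ne_zero.mpr (det_ne_of_not_mem hw h)
  have nc1 : ∀ z ∈ Ω, D3 (liftPt ℝ (a₁ z.1)) (liftDir ℝ (deriv a₁ z.1)) (liftPt ℝ (a₂ z.2)) ≠ 0 :=
    fun z hz => tn (ha₁' _ (m1 z hz)) (htan₁ z hz).1
  have nb3 : ∀ z ∈ Ω,
      D3 (liftPt ℝ (a₃ (g z))) (liftDir ℝ (deriv a₃ (g z))) (liftPt ℝ (a₁ z.1)) ≠ 0 :=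
    fun z hz => tn (ha₃' _ (hgm z hz)) (htan₃ z hz).1
  have nV1 : ∀ z ∈ Ω,
      D3 (liftPt ℝ (a₁ z.1)) (liftDir ℝ (v₁ z.1)) (liftDir ℝ (deriv a₁ z.1)) ≠ 0 :=
    fun z hz => tv (ha₁' _ (m1 z hz)) (hv₁t _ (m1 z hz))
  have F1 : ∀ z ∈ Ω,
      D3 (liftPt ℝ (a₁ z.1)) (liftDir ℝ (deriv a₁ z.1)) (liftPt ℝ (a₂ z.2)) *
        D3 (liftPt ℝ (a₁ z.1)) (liftDir ℝ (v₁ z.1)) (liftPt ℝ (a₃ (g z))) +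
      D3 (liftPt ℝ (a₁ z.1)) (liftDir ℝ (deriv a₁ z.1)) (liftPt ℝ (a₃ (g z))) *
        D3 (liftPt ℝ (a₁ z.1)) (liftDir ℝ (v₁ z.1)) (liftPt ℝ (a₂ z.2)) = 0 := by
    intro z hz
    simp only [D3_lift_PDP]
    exact planeSym_det (href₁ z hz)
  have g2 : ∀ z ∈ Ω, ContDiffAt ℝ 2 g z := by
    intro z hz
    have x1 := ha₁ _ (m1 z hz)
    have x2 := ha₂ _ (m2 z hz)
    have x3 := ha₃ _ (hgm z hz)
    exact g_contDiffAt (A := fun s => liftPt ℝ (a₁ s)) (A1 := fun s => liftDir ℝ (deriv a₁ s))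
      (V := fun s => liftDir ℝ (v₁ s)) (B := fun s => liftPt ℝ (a₂ s))
      (C := fun s => liftPt ℝ (a₃ s)) hΩo hg hz (liftPt_analyticAt x1).contDiffAt
      (liftDir_analyticAt x1.deriv).contDiffAt
      (liftDir_analyticAt (hv₁ _ (m1 z hz))).contDiffAt
      (liftPt_analyticAt x2).contDiffAt (liftPt_analyticAt x3).contDiffAt
      (liftPt_hasDerivAt x3) F1
      (refl_transversal (hD z hz) (nc1 z hz) (nV1 z hz) (nb3 z hz) (F1 z hz))
  have L : LocalData (fun s => liftPt ℝ (a₁ s)) (fun s => liftDir ℝ (deriv a₁ s))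
      (fun s => liftDir ℝ (deriv (deriv a₁) s))
      (fun s => liftPt ℝ (a₂ s)) (fun s => liftDir ℝ (deriv a₂ s))
      (fun s => liftDir ℝ (deriv (deriv a₂) s))
      (fun s => liftPt ℝ (a₃ s)) (fun s => liftDir ℝ (deriv a₃ s))
      (fun s => liftDir ℝ (deriv (deriv a₃) s))
      (fun s => liftDir ℝ (v₁ s)) (fun s => liftDir ℝ (v₂ s)) (fun s => liftDir ℝ (v₃ s))
      (fun s => liftDir ℝ (deriv v₃ s)) Ω g :=
    { op := hΩo
      g2 := g2
      hA := fun z hz => liftPt_hasDerivAt (ha₁ _ (m1 z hz))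
      hA1 := fun z hz => liftDir_hasDerivAt (ha₁ _ (m1 z hz)).deriv
      hB := fun z hz => liftPt_hasDerivAt (ha₂ _ (m2 z hz))
      hB1 := fun z hz => liftDir_hasDerivAt (ha₂ _ (m2 z hz)).deriv
      hC := fun z hz => liftPt_hasDerivAt (ha₃ _ (hgm z hz))
      hC1 := fun z hz => liftDir_hasDerivAt (ha₃ _ (hgm z hz)).deriv
      hV3 := fun z hz => liftDir_hasDerivAt (hv₃ _ (hgm z hz))
      hD := hD
      nc1 := nc1
      nb1 := fun z hz => tn (ha₁' _ (m1 z hz)) (htan₁ z hz).2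
      nc2 := fun z hz => tn (ha₂' _ (m2 z hz)) (htan₂ z hz).1
      na2 := fun z hz => tn (ha₂' _ (m2 z hz)) (htan₂ z hz).2
      na3 := fun z hz => tn (ha₃' _ (hgm z hz)) (htan₃ z hz).2
      nb3 := nb3
      nV1 := nV1
      nV2 := fun z hz => tv (ha₂' _ (m2 z hz)) (hv₂t _ (m2 z hz))
      nV3 := fun z hz => tv (ha₃' _ (hgm z hz)) (hv₃t _ (hgm z hz))
      F1 := F1
      F2 := by
        intro z hz
        simp only [D3_lift_PDP]
        linear_combination planeSym_det (href₂ z hz)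
      F3 := by
        intro z hz
        simp only [D3_lift_PDP]
        exact planeSym_det (href₃ z hz) }
  -- neighbourhoods of the three base points
  have ev1 : ∀ᶠ s in 𝓝 z₀.1, (s, z₀.2) ∈ Ω := slice_fst hΩo hz₀
  have ev2 : ∀ᶠ u in 𝓝 z₀.2, (z₀.1, u) ∈ Ω := slice_snd hΩo hz₀
  have hmap : map (fun s => g (s, z₀.2)) (𝓝 z₀.1) = 𝓝 (g z₀) := by
    have hcd : ContDiffAt ℝ 2 (fun s => g (s, z₀.2)) z₀.1 :=
      ContDiffAt.comp z₀.1 (g := g) (f := fun s : ℝ => (s, z₀.2)) (g2 z₀ hz₀) (by fun_prop)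
    have hs := hcd.hasStrictDerivAt' (pS_hasDerivAt (g2 z₀ hz₀)) (by norm_num)
    exact hs.map_nhds_eq (L.pS_ne hz₀)
  have ev3 : ∀ {p : ℝ → Prop}, (∀ᶠ s in 𝓝 z₀.1, p (g (s, z₀.2))) → ∀ᶠ t in 𝓝 (g z₀), p t := by
    intro p hp
    rw [← hmap]
    exact hp
  have l1 := curve_on_line hU₁o hU₁c.isPreconnected ha₁ (m1 _ hz₀) (ha₁' _ (m1 _ hz₀))
    (ev1.mono fun s hs => by
      have := (L.second hs).1
      rwa [D3_lift_PDD] at this)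
  have l2 := curve_on_line hU₂o hU₂c.isPreconnected ha₂ (m2 _ hz₀) (ha₂' _ (m2 _ hz₀))
    (ev2.mono fun s hs => by
      have := (L.second hs).2.1
      rwa [D3_lift_PDD] at this)
  have l3 := curve_on_line hU₃o hU₃c.isPreconnected ha₃ (hgm _ hz₀) (ha₃' _ (hgm _ hz₀))
    (ev3 (ev1.mono fun s hs => by
      have := (L.second hs).2.2
      rwa [D3_lift_PDD] at this))
  have v10 : ∀ s ∈ U₁, v₁ s ≠ 0 := fun s hs h => hv₁t s hs (by rw [h]; exact zero_mem _)
  have v20 : ∀ s ∈ U₂, v₂ s ≠ 0 := fun s hs h => hv₂t s hs (by rw [h]; exact zero_mem _)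
  have v30 : ∀ s ∈ U₃, v₃ s ≠ 0 := fun s hs h => hv₃t s hs (by rw [h]; exact zero_mem _)
  set n1 := cr (liftPt ℝ (a₁ z₀.1)) (liftDir ℝ (deriv a₁ z₀.1)) with hn1
  set n2 := cr (liftPt ℝ (a₂ z₀.2)) (liftDir ℝ (deriv a₂ z₀.2)) with hn2
  set n3 := cr (liftPt ℝ (a₃ (g z₀))) (liftDir ℝ (deriv a₃ (g z₀))) with hn3
  have p1 : ∀ s ∈ U₁, ∃ ρ : ℝ, ρ ≠ 0 ∧
      cr (liftPt ℝ (a₁ s)) (liftDir ℝ (deriv a₁ s)) = ρ • n1 := fun s hs =>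
    normal_prop (ha₁' _ (m1 _ hz₀)) (ha₁' s hs) (l1 s hs).1 (l1 s hs).2
  have p3 : ∀ s ∈ U₃, ∃ ρ : ℝ, ρ ≠ 0 ∧
      cr (liftPt ℝ (a₃ s)) (liftDir ℝ (deriv a₃ s)) = ρ • n3 := fun s hs =>
    normal_prop (ha₃' _ (hgm _ hz₀)) (ha₃' s hs) (l3 s hs).1 (l3 s hs).2
  have hdet : D3 n1 n2 n3 ≠ 0 := by
    intro h0
    have h1 := D3_normals (liftPt ℝ (a₁ z₀.1)) (liftDir ℝ (deriv a₁ z₀.1))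
      (liftPt ℝ (a₂ z₀.2)) (liftDir ℝ (deriv a₂ z₀.2))
      (liftPt ℝ (a₃ (g z₀))) (liftDir ℝ (deriv a₃ (g z₀)))
    rw [← hn1, ← hn2, ← hn3, h0, zero_mul] at h1
    have hK := (L.first hz₀).2.2
    have h2 : D3 (liftPt ℝ (a₁ z₀.1)) (liftDir ℝ (deriv a₁ z₀.1)) (liftPt ℝ (a₂ z₀.2)) *
        D3 (liftPt ℝ (a₂ z₀.2)) (liftDir ℝ (deriv a₂ z₀.2)) (liftPt ℝ (a₃ (g z₀))) *
        D3 (liftPt ℝ (a₃ (g z₀))) (liftDir ℝ (deriv a₃ (g z₀))) (liftPt ℝ (a₁ z₀.1)) = 0 := by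
      linear_combination (-1 / 2 : ℝ) * h1 + (1 / 2 : ℝ) * hK
    exact mul_ne_zero (mul_ne_zero (L.nc1 _ hz₀) (L.na2 _ hz₀)) (L.nb3 _ hz₀) h2
  refine ⟨cr n3 n1, cr n1 n2, cr n2 n3, linInd_of_D3 (by rw [D3_cr]; exact pow_ne_zero 2 hdet),
    fun s hs => ⟨mem_side hdet (dt_normal_zero (l1 s hs).1), ?_⟩,
    fun s hs => ⟨mem_side (by rw [D3_cyc]; exact hdet) (dt_normal_zero (l2 s hs).1), ?_⟩,
    fun s hs => ⟨mem_side (by rw [← D3_cyc]; exact hdet) (dt_normal_zero (l3 s hs).1), ?_⟩⟩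
  · refine field_half hU₁c.isPreconnected ha₁ hv₁ v10 (m1 _ hz₀) (ev1.mono fun s hs => ?_) s hs
    have h := concur (L.hD _ hs) (L.nc1 _ hs) (L.nV1 _ hs) (L.F1 _ hs) (L.first hs).2.2
    obtain ⟨ρ, hρ, hρe⟩ := p3 _ (hgm _ hs)
    simp only [← dt_cr] at h
    rw [hρe, dt_smul, dt_smul] at h
    refine (mul_eq_zero.mp (?_ : ρ * _ = 0)).resolve_left hρ
    linear_combination h
  · refine field_half hU₂c.isPreconnected ha₂ hv₂ v20 (m2 _ hz₀) (ev2.mono fun s hs => ?_) s hs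
    have h := concur (by rw [D3_cyc]; exact L.hD _ hs) (L.na2 _ hs) (L.nV2 _ hs) (L.F2 _ hs)
      (B' := liftDir ℝ (deriv a₃ (g (z₀.1, s)))) (C' := liftDir ℝ (deriv a₁ z₀.1))
      (by linear_combination (L.first hs).2.2)
    obtain ⟨ρ, hρ, hρe⟩ := p3 _ (hgm _ hs)
    simp only [← dt_cr] at h
    rw [hρe, dt_smul, dt_smul] at h
    refine (mul_eq_zero.mp (?_ : ρ * _ = 0)).resolve_left hρ
    linear_combination h
  · refine field_half hU₃c.isPreconnected ha₃ hv₃ v30 (hgm _ hz₀)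
      (ev3 (ev1.mono fun s hs => ?_)) s hs
    have h := concur (by rw [← D3_cyc]; exact L.hD _ hs) (L.nb3 _ hs) (L.nV3 _ hs) (L.F3 _ hs)
      (B' := liftDir ℝ (deriv a₁ s)) (C' := liftDir ℝ (deriv a₂ z₀.2))
      (by linear_combination (L.first hs).2.2)
    obtain ⟨ρ, hρ, hρe⟩ := p1 _ (m1 _ hs)
    simp only [← dt_cr] at h
    rw [hρe, dt_smul, dt_smul] at h
    refine (mul_eq_zero.mp (?_ : ρ * _ = 0)).resolve_left hρ
    linear_combination h
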